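/- Let k be an algebraic closure of 𝔽₂ and K = k(t) the rational function field over k. The group of points of the Weierstrass curve W : y² + xy + (t²+t)²y = x³ + (t²+t)²x² over K is isomorphic, as an abelian group, to ℤ ⊕ ℤ/8ℤ. -/

import Mathlib

/-- An algebraic closure `k` of `𝔽₂`. -/
noncomputable abbrev k : Type := AlgebraicClosure (ZMod 2)

/-- The rational function field `K = k(t)`. -/
noncomputable abbrev K : Type := RatFunc k

/-- The variable `t` of `K = k(t)`. -/
noncomputable def t : K := RatFunc.X

/-- The Weierstrass curve `W : y² + xy + (t²+t)²y = x³ + (t²+t)²x²` over `K`. -/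
noncomputable def W : WeierstrassCurve.Affine K :=
  { a₁ := 1, a₂ := (t ^ 2 + t) ^ 2, a₃ := (t ^ 2 + t) ^ 2, a₄ := 0, a₆ := 0 }

/-!
Translating `(x, y)` turns `W` into `E (s⁸)`, where `s = t² + t` and `E b` is `y² + xy = x³ + b`,
and the Frobenius isogenies `E b → E (b²)` form a tower `E s → E (s²) → E (s⁴) → E (s⁸)`.

On each `E (b²)` the class of `x` modulo squares is a homomorphism whose kernel is the image of
Frobenius, and for `b` a power of `s` only divisors of `s` can occur in it. So each step of the
tower needs at most two new generators.

At the bottom, every `x`-coordinate on `E s` has the form `w² + w` for degree reasons, which makes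
every Frobenius image on `E (s²)` divisible by two. Hence `E s` modulo doubling is generated by
`P₀ = (1, t + ω)`, and a descent on the naive height of `x` gives `E s = ℤ P₀`. Climbing the tower
then halves the Frobenius image of `P₀` once, to `P₁`, and halves the two-torsion point `(0, s)` of
`E (s²)` twice, to a point `R₃` of order eight on `E (s⁸)`.
-/

namespace CharTwoCurve

open WeierstrassCurve Polynomial

section AddCommGroup

variable {A : Type*} [AddCommGroup A]

theorem zmultiples_eq_top_of_descent (g : A) (h : A → ℕ)
    (descend : ∀ P, P ∈ AddSubgroup.zmultiples g ∨
      ∃ Q, h Q < h P ∧ P - 2 • Q ∈ AddSubgroup.zmultiples g) :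
    AddSubgroup.zmultiples g = ⊤ := by
  rw [AddSubgroup.eq_top_iff']
  intro P
  induction hP : h P using Nat.strong_induction_on generalizing P with
  | _ n ih =>
    rcases descend P with hmem | ⟨Q, hQ, hmem⟩
    · exact hmem
    · exact sub_add_cancel P (2 • Q) ▸ add_mem hmem (nsmul_mem (ih _ (hP ▸ hQ) Q rfl) 2)

theorem not_isOfFinAddOrder_of_lt_two_nsmul (h : A → ℕ) (h_zero : h 0 = 0)
    (h_lt : ∀ P ≠ 0, h P < h (2 • P)) {P : A} (hP : P ≠ 0) : ¬ IsOfFinAddOrder P := by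
  intro hfin
  obtain ⟨Q, hQ, hmax⟩ := Set.exists_max_image (AddSubgroup.zmultiples P : Set A) h
    (finite_zmultiples.2 hfin) ⟨0, zero_mem _⟩
  by_cases hQ0 : Q = 0
  · have := hmax (2 • P) (nsmul_mem (AddSubgroup.mem_zmultiples P) 2)
    have := h_lt P hP
    grind
  · exact (hmax (2 • Q) (nsmul_mem hQ 2)).not_gt (h_lt Q hQ0)

theorem nonempty_addEquiv_int_prod_zmod {Z R : A} (hZ : ¬ IsOfFinAddOrder Z)
    (hR : IsOfFinAddOrder R)
    (hgen : AddSubgroup.zmultiples R ⊔ AddSubgroup.zmultiples Z = ⊤) :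
    Nonempty (A ≃+ ℤ × ZMod (addOrderOf R)) := by
  let torsionPart : ZMod (addOrderOf R) →+ A :=
    ZMod.lift _ ⟨zmultiplesHom A R, by simp [addOrderOf_nsmul_eq_zero]⟩
  have torsionPart_intCast (i : ℤ) : torsionPart i = i • R := ZMod.lift_coe ..
  let f : ℤ × ZMod (addOrderOf R) →+ A := (zmultiplesHom A Z).coprod torsionPart
  have f_apply (j i : ℤ) : f (j, i) = j • Z + i • R := by
    simp [f, torsionPart_intCast]
  refine ⟨(AddEquiv.ofBijective f ⟨?_, fun P => ?_⟩).symm⟩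
  · rw [injective_iff_map_eq_zero]
    rintro ⟨j, i⟩ hji
    obtain ⟨i, rfl⟩ := ZMod.intCast_surjective i
    rw [f_apply] at hji
    have hj : j = 0 := by
      by_contra hj
      refine hZ (isOfFinAddOrder_iff_zsmul_eq_zero.2
        ⟨addOrderOf R * j, mul_ne_zero (mod_cast hR.addOrderOf_pos.ne') hj, ?_⟩)
      rw [mul_zsmul, eq_neg_of_add_eq_zero_left hji, zsmul_neg, zsmul_comm, natCast_zsmul,
        addOrderOf_nsmul_eq_zero, zsmul_zero, neg_zero]
    rw [hj, zero_zsmul, zero_add, ← addOrderOf_dvd_iff_zsmul_eq_zero] at hji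
    rw [hj, (ZMod.intCast_zmod_eq_zero_iff_dvd _ _).2 hji, Prod.mk_zero_zero]
  · obtain ⟨a, ha, b, hb, rfl⟩ := AddSubgroup.mem_sup.1 (hgen ▸ AddSubgroup.mem_top P)
    obtain ⟨i, rfl⟩ := AddSubgroup.mem_zmultiples_iff.1 ha
    obtain ⟨j, rfl⟩ := AddSubgroup.mem_zmultiples_iff.1 hb
    exact ⟨(j, i), by rw [f_apply, add_comm]⟩

end AddCommGroup

section VariableChange

variable {F : Type*} [Field F] (W : WeierstrassCurve F) (C : VariableChange F)

/-- The abscissa `u²x + r` on `W` of the point of `C • W` with abscissa `x`. -/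
def changeX (x : F) : F := C.u ^ 2 * x + C.r

/-- The ordinate `u³y + u²sx + t` on `W` of the point `(x, y)` of `C • W`. -/
def changeY (x y : F) : F := C.u ^ 3 * y + C.u ^ 2 * C.s * x + C.t

theorem changeX_inj {x₁ x₂ : F} : changeX C x₁ = changeX C x₂ ↔ x₁ = x₂ := by
  simp [changeX]

theorem changeY_inj {x y₁ y₂ : F} : changeY C x y₁ = changeY C x y₂ ↔ y₁ = y₂ := by
  simp [changeY]

theorem nonsingular_variableChange_iff (x y : F) :
    (C • W).toAffine.Nonsingular x y ↔ W.toAffine.Nonsingular (changeX C x) (changeY C x y) := by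
  have hC : (⟨1, x, 0, y⟩ : VariableChange F) * C =
      ⟨C.u, 0, C.s, 0⟩ * ⟨1, changeX C x, 0, changeY C x y⟩ := by
    simp only [VariableChange.mul_def, VariableChange.mk.injEq, changeX, changeY]
    refine ⟨?_, ?_, ?_, ?_⟩ <;> simp <;> ring
  rw [Affine.nonsingular_iff_variableChange, W.toAffine.nonsingular_iff_variableChange]
  simp only [toAffine]
  rw [← mul_smul, hC, mul_smul, Affine.nonsingular_zero, Affine.nonsingular_zero]
  generalize (⟨1, changeX C x, 0, changeY C x y⟩ : VariableChange F) • W = W'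
  simp only [variableChange_a₃, variableChange_a₄, variableChange_a₆]
  have hu := C.u.ne_zero
  simp only [Units.val_inv_eq_inv_val]
  grind

theorem negY_variableChange (x y : F) :
    W.toAffine.negY (changeX C x) (changeY C x y) =
      changeY C x ((C • W).toAffine.negY x y) := by
  have hu := C.u.ne_zero
  simp only [Affine.negY, variableChange_a₁, variableChange_a₃, Units.val_inv_eq_inv_val,
    changeX, changeY]
  field_simp
  ring

theorem changeX_eq_and_changeY_eq_negY_iff (x₁ x₂ y₁ y₂ : F) :
    (changeX C x₁ = changeX C x₂ ∧
      changeY C x₁ y₁ = W.toAffine.negY (changeX C x₂) (changeY C x₂ y₂)) ↔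
      x₁ = x₂ ∧ y₁ = (C • W).toAffine.negY x₂ y₂ := by
  rw [negY_variableChange, changeX_inj]
  exact and_congr_right fun hx => by rw [hx, changeY_inj]

variable [DecidableEq F]

theorem slope_variableChange {x₁ x₂ y₁ y₂ : F} (h₁ : (C • W).toAffine.Equation x₁ y₁)
    (h₂ : (C • W).toAffine.Equation x₂ y₂)
    (hxy : ¬(x₁ = x₂ ∧ y₁ = (C • W).toAffine.negY x₂ y₂)) :
    W.toAffine.slope (changeX C x₁) (changeX C x₂) (changeY C x₁ y₁) (changeY C x₂ y₂) =
      C.u * (C • W).toAffine.slope x₁ x₂ y₁ y₂ + C.s := by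
  have hu := C.u.ne_zero
  by_cases hx : x₁ = x₂
  · have hy : y₁ ≠ (C • W).toAffine.negY x₂ y₂ := fun h => hxy ⟨hx, h⟩
    obtain rfl : y₁ = y₂ := Affine.Y_eq_of_Y_ne h₁ h₂ hx hy
    subst hx
    have hsub : y₁ - (C • W).toAffine.negY x₁ y₁ ≠ 0 := sub_ne_zero.2 hy
    rw [Affine.slope_of_Y_ne rfl hy, Affine.slope_of_Y_ne rfl
      (by rwa [negY_variableChange, Ne, changeY_inj]), negY_variableChange,
      show changeY C x₁ y₁ - changeY C x₁ ((C • W).toAffine.negY x₁ y₁) =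
        C.u ^ 3 * (y₁ - (C • W).toAffine.negY x₁ y₁) by simp only [changeY]; ring]
    field_simp
    simp only [Affine.negY, variableChange_a₁, variableChange_a₂, variableChange_a₃,
      variableChange_a₄, Units.val_inv_eq_inv_val, changeX, changeY]
    field_simp
    ring
  · rw [Affine.slope_of_X_ne hx, Affine.slope_of_X_ne (by rwa [Ne, changeX_inj]),
      show changeX C x₁ - changeX C x₂ = C.u ^ 2 * (x₁ - x₂) by simp only [changeX]; ring]
    have hsub : x₁ - x₂ ≠ 0 := sub_ne_zero.2 hx
    simp only [changeY]
    field_simp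
    ring

/-- The homomorphism on nonsingular points given by an admissible change of variables. -/
def variableChangeHom : (C • W).toAffine.Point →+ W.toAffine.Point where
  toFun
    | 0 => 0
    | .some x y h => .some _ _ ((nonsingular_variableChange_iff W C x y).1 h)
  map_zero' := rfl
  map_add' := by
    rintro (_ | ⟨x₁, y₁, h₁⟩) (_ | ⟨x₂, y₂, h₂⟩)
    any_goals rfl
    have hiff := changeX_eq_and_changeY_eq_negY_iff W C x₁ x₂ y₁ y₂
    by_cases hxy : x₁ = x₂ ∧ y₁ = (C • W).toAffine.negY x₂ y₂
    · rw [Affine.Point.add_of_Y_eq hxy.1 hxy.2]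
      exact (Affine.Point.add_of_Y_eq (hiff.2 hxy).1 (hiff.2 hxy).2).symm
    · rw [Affine.Point.add_some hxy]
      refine Eq.trans ?_ (Affine.Point.add_some (hiff.not.2 hxy)).symm
      have hu := C.u.ne_zero
      rw [Affine.Point.some.injEq, slope_variableChange W C h₁.1 h₂.1 hxy]
      simp only [Affine.addX, Affine.addY, Affine.negAddY, Affine.negY, variableChange_a₁,
        variableChange_a₂, variableChange_a₃, Units.val_inv_eq_inv_val, changeX, changeY]
      constructor <;> field_simp <;> ring

theorem variableChangeHom_bijective : Function.Bijective (variableChangeHom W C) := by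
  constructor
  · rw [injective_iff_map_eq_zero]
    rintro (_ | ⟨x, y, h⟩) hP
    · rfl
    · exact absurd hP (Affine.Point.some_ne_zero _)
  · rintro (_ | ⟨x, y, h⟩)
    · exact ⟨0, rfl⟩
    · have hu := C.u.ne_zero
      have hx : changeX C ((x - C.r) / C.u ^ 2) = x := by
        simp only [changeX]; field_simp; ring
      have hy : changeY C ((x - C.r) / C.u ^ 2) ((y - C.s * (x - C.r) - C.t) / C.u ^ 3) = y := by
        simp only [changeY]; field_simp; ring
      exact ⟨.some _ _ ((nonsingular_variableChange_iff W C _ _).2 (hx.symm ▸ hy.symm ▸ h)),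
        (Affine.Point.some.injEq ..).mpr ⟨hx, hy⟩⟩

end VariableChange

section PointMap

variable {F L : Type*} [Field F] [Field L] [DecidableEq F] [DecidableEq L]
  {W : Affine F} {W' : Affine L} (f : F →+* L) (hW : W.map f = W')

/-- The homomorphism on nonsingular points induced by a field homomorphism `f` carrying the
coefficients of `W` to those of `W'`. -/
noncomputable def pointMap : W.Point →+ W'.Point := by
  subst hW
  letI := f.toAlgebra
  exact Affine.Point.map (W' := W) (Algebra.ofId F L)

theorem pointMap_some {x y : F} (h : W.Nonsingular x y) :
    pointMap f hW (.some x y h) =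
      .some (f x) (f y) (hW ▸ (W.map_nonsingular f.injective x y).2 h) := by
  subst hW
  rfl

theorem pointMap_injective : Function.Injective (pointMap f hW) := by
  subst hW
  let := f.toAlgebra
  exact Affine.Point.map_injective (W' := W) (Algebra.ofId F L)

end PointMap

section E

variable {F : Type*} [Field F]

/-- The curve `y² + xy = x³ + b`; in characteristic two with `b ≠ 0` it is the ordinary elliptic
curve of `j`-invariant `b⁻¹`. -/
def E (b : F) : Affine F :=
  { a₁ := 1, a₂ := 0, a₃ := 0, a₄ := 0, a₆ := b }

theorem E_equation_iff {b x y : F} : (E b).Equation x y ↔ y ^ 2 + x * y = x ^ 3 + b := by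
  simp [Affine.equation_iff, E]

section

variable [DecidableEq F]

/-- The class of `x(P)` modulo squares on `E (b²)`, the connecting homomorphism of the descent by
Frobenius. The value at the two-torsion point `(0, b)` is chosen to be `b`, and `1` at zero, which
makes `xClass` multiplicative modulo squares. -/
def xClass {b : F} : (E (b ^ 2)).Point → F
  | 0 => 1
  | .some x _ _ => if x = 0 then b else x

theorem xClass_zero {b : F} : xClass (0 : (E (b ^ 2)).Point) = 1 := rfl

theorem xClass_neg {b : F} (P : (E (b ^ 2)).Point) : xClass (-P) = xClass P := by
  cases P <;> rfl

end

variable [CharP F 2] {b : F}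

theorem map_frobenius_E (b : F) : (E b).map (frobenius F 2) = E (b ^ 2) := by
  ext <;> simp [E, frobenius_def, WeierstrassCurve.map]

instance [NeZero b] : (E b).IsElliptic := by
  have : (E b).IsCharTwoJNeZeroNF := ⟨rfl, rfl, rfl⟩
  rw [isElliptic_iff, Δ_of_isCharTwoJNeZeroNF_of_char_two]
  exact (NeZero.ne b).isUnit

variable [NeZero b]

/-- The affine point `(x, y)` of `E b`. -/
def mkPoint (x y : F) (h : y ^ 2 + x * y = x ^ 3 + b) : (E b).Point :=
  .mk (E_equation_iff.2 h)

@[elab_as_elim]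
theorem point_cases {motive : (E b).Point → Prop} (zero : motive 0)
    (affine : ∀ x y h, motive (mkPoint x y h)) (P : (E b).Point) : motive P := by
  rcases P with _ | ⟨x, y, h⟩
  exacts [zero, affine x y (E_equation_iff.1 h.1)]

theorem mkPoint_ne_zero {x y : F} (h : y ^ 2 + x * y = x ^ 3 + b) : mkPoint x y h ≠ 0 :=
  Affine.Point.some_ne_zero _

theorem mkPoint_inj {x y x' y' : F} {h : y ^ 2 + x * y = x ^ 3 + b}
    {h' : y' ^ 2 + x' * y' = x' ^ 3 + b} :
    mkPoint x y h = mkPoint x' y' h' ↔ x = x' ∧ y = y' := by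
  simp [mkPoint, Affine.Point.mk]

theorem neg_mkPoint {x y : F} (h : y ^ 2 + x * y = x ^ 3 + b) :
    -mkPoint x y h = mkPoint x (y + x) (by grind) :=
  (Affine.Point.some.injEq ..).mpr ⟨rfl, by simp only [Affine.negY, E]; grind⟩

theorem mkPoint_eq_or_eq_neg {x y y' : F} (h : y ^ 2 + x * y = x ^ 3 + b)
    (h' : y' ^ 2 + x * y' = x ^ 3 + b) :
    mkPoint x y h = mkPoint x y' h' ∨ mkPoint x y h = -mkPoint x y' h' :=
  Affine.Point.X_eq_iff.1 rfl

variable [DecidableEq F]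

theorem exists_mkPoint_add_mkPoint {x y x' y' : F} (h : y ^ 2 + x * y = x ^ 3 + b)
    (h' : y' ^ 2 + x' * y' = x' ^ 3 + b) (hx : x ≠ x') :
    ∃ x₃ y₃ h₃, mkPoint x y h + mkPoint x' y' h' = mkPoint x₃ y₃ h₃ ∧
      x₃ = ((y + y') / (x + x')) ^ 2 + (y + y') / (x + x') + x + x' := by
  have hadd := Affine.nonsingular_add (Affine.equation_iff_nonsingular.1 (E_equation_iff.2 h))
    (Affine.equation_iff_nonsingular.1 (E_equation_iff.2 h')) fun hxy => hx hxy.1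
  refine ⟨_, _, E_equation_iff.1 hadd.1, Affine.Point.add_of_X_ne hx, ?_⟩
  rw [Affine.slope_of_X_ne hx, CharTwo.sub_eq_add, CharTwo.sub_eq_add]
  simp only [Affine.addX, E]
  grind

theorem exists_two_nsmul_mkPoint {x y : F} (h : y ^ 2 + x * y = x ^ 3 + b) (hx : x ≠ 0) :
    ∃ h₃, 2 • mkPoint x y h =
      mkPoint (x ^ 2 + b / x ^ 2) (x ^ 2 + (x + y / x + 1) * (x ^ 2 + b / x ^ 2)) h₃ := by
  have hsub : y - (E b).negY x y = x := by simp only [Affine.negY, E]; grind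
  have hy : y ≠ (E b).negY x y := sub_ne_zero.1 (hsub.symm ▸ hx)
  have hslope : (E b).slope x x y y = x + y / x := by
    rw [Affine.slope_of_Y_ne rfl hy, hsub]
    simp only [E]
    grind
  have hX : (E b).addX x x ((E b).slope x x y y) = x ^ 2 + b / x ^ 2 := by
    rw [hslope]
    simp only [Affine.addX, E]
    grind
  have hY : (E b).addY x x y ((E b).slope x x y y) =
      x ^ 2 + (x + y / x + 1) * (x ^ 2 + b / x ^ 2) := by
    rw [Affine.addY, Affine.negAddY, hX, hslope]
    simp only [Affine.negY, E]
    grind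
  have hns := Affine.equation_iff_nonsingular.1 (E_equation_iff.2 h)
  have hadd := (Affine.nonsingular_add hns hns fun hxy => hy hxy.2).1
  rw [hX, hY] at hadd
  refine ⟨E_equation_iff.1 hadd, ?_⟩
  rw [two_nsmul]
  exact (Affine.Point.add_self_of_Y_ne hy).trans ((Affine.Point.some.injEq ..).mpr ⟨hX, hY⟩)

theorem two_nsmul_mkPoint_zero {y : F} (h : y ^ 2 + 0 * y = 0 ^ 3 + b) :
    2 • mkPoint 0 y h = 0 := by
  rw [two_nsmul]
  exact Affine.Point.add_self_of_Y_eq (by simp only [Affine.negY, E]; grind)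

theorem exists_mkPoint_add_sub_mkPoint {x y x' y' : F} (h : y ^ 2 + x * y = x ^ 3 + b)
    (h' : y' ^ 2 + x' * y' = x' ^ 3 + b) (hx : x ≠ x') :
    ∃ x₃ y₃ h₃ x₄ y₄ h₄, mkPoint x y h + mkPoint x' y' h' = mkPoint x₃ y₃ h₃ ∧
      mkPoint x y h - mkPoint x' y' h' = mkPoint x₄ y₄ h₄ ∧
      (x₃ + x₄) * (x + x') ^ 2 = x * x' ∧ x₃ * x₄ * (x + x') ^ 2 = x ^ 2 * x' ^ 2 + b := by
  have hxx : x + x' ≠ 0 := by rwa [← CharTwo.sub_eq_add, sub_ne_zero]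
  have hneg : (y' + x') ^ 2 + x' * (y' + x') = x' ^ 3 + b := by grind
  obtain ⟨x₃, y₃, h₃, hadd, hx₃⟩ := exists_mkPoint_add_mkPoint h h' hx
  obtain ⟨x₄, y₄, h₄, hsub, hx₄⟩ := exists_mkPoint_add_mkPoint h hneg hx
  rw [← neg_mkPoint h', ← sub_eq_add_neg] at hsub
  refine ⟨x₃, y₃, h₃, x₄, y₄, h₄, hadd, hsub, ?_, ?_⟩
  all_goals
    have hx₃' : x₃ * (x + x') ^ 2 = x * y' + x' * y + x * x' * (x + x') := by
      rw [hx₃]; field_simp; grind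
    have hx₄' : x₄ * (x + x') ^ 2 = x * y' + x' * y + x * x' + x * x' * (x + x') := by
      rw [hx₄]; field_simp; grind
  · rw [add_mul, hx₃', hx₄']; grind
  · apply mul_right_cancel₀ (pow_ne_zero 2 hxx)
    rw [show x₃ * x₄ * (x + x') ^ 2 * (x + x') ^ 2 =
      (x₃ * (x + x') ^ 2) * (x₄ * (x + x') ^ 2) by ring, hx₃', hx₄']
    clear * - h h'
    grind

/-- The Frobenius isogeny `(x, y) ↦ (x², y²)` from `E b` to `E (b²)`. -/
noncomputable def frobeniusHom (b : F) : (E b).Point →+ (E (b ^ 2)).Point :=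
  pointMap (frobenius F 2) (map_frobenius_E b)

theorem frobeniusHom_injective (b : F) : Function.Injective (frobeniusHom b) :=
  pointMap_injective _ _

theorem frobeniusHom_mkPoint {x y : F} (h : y ^ 2 + x * y = x ^ 3 + b) :
    frobeniusHom b (mkPoint x y h) = mkPoint (x ^ 2) (y ^ 2) (by grind) :=
  pointMap_some _ _ _

theorem exists_two_nsmul_eq_frobeniusHom {x y z : F} (h : y ^ 2 + x * y = x ^ 3 + b)
    (hx : x ≠ 0) (hz : z ^ 2 + b = x * z) :
    ∃ Q : (E (b ^ 2)).Point, 2 • Q = frobeniusHom b (mkPoint x y h) := by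
  have hz₀ : z ≠ 0 := by
    rintro rfl
    exact NeZero.ne b (by simpa using hz)
  let w := z * (1 + x + (y + z) / x + z)
  have hw : w ^ 2 + z * w = z ^ 3 + b ^ 2 := by
    simp only [w]
    field_simp
    grind
  obtain ⟨h₃, hdbl⟩ := exists_two_nsmul_mkPoint hw hz₀
  have hx₃ : z ^ 2 + b ^ 2 / z ^ 2 = x ^ 2 := by
    field_simp
    grind
  refine ⟨mkPoint z w hw, ?_⟩
  rw [hdbl, frobeniusHom_mkPoint, mkPoint_inj, hx₃]
  refine ⟨rfl, ?_⟩
  simp only [w]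
  field_simp
  grind

theorem xClass_mkPoint_zero {y : F} (h : y ^ 2 + 0 * y = 0 ^ 3 + b ^ 2) :
    xClass (mkPoint 0 y h) = b := if_pos rfl

theorem xClass_mkPoint {x y : F} (h : y ^ 2 + x * y = x ^ 3 + b ^ 2) (hx : x ≠ 0) :
    xClass (mkPoint x y h) = x := if_neg hx

theorem xClass_ne_zero (P : (E (b ^ 2)).Point) : xClass P ≠ 0 := by
  induction P using point_cases with
  | zero => exact one_ne_zero
  | affine x y h =>
    by_cases hx : x = 0
    · subst hx
      rw [xClass_mkPoint_zero]
      exact NeZero.ne b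
    · rwa [xClass_mkPoint h hx]

theorem mem_range_frobeniusHom_of_isSquare_xClass {P : (E (b ^ 2)).Point}
    (hP : IsSquare (xClass P)) : P ∈ (frobeniusHom b).range := by
  induction P using point_cases with
  | zero => exact zero_mem _
  | affine x y h =>
    by_cases hx : x = 0
    · subst hx
      obtain ⟨c, hc⟩ := xClass_mkPoint_zero h ▸ hP
      refine ⟨mkPoint 0 c (by grind), ?_⟩
      rw [frobeniusHom_mkPoint, mkPoint_inj]
      grind
    · obtain ⟨u, hu⟩ := xClass_mkPoint h hx ▸ hP
      have hu₀ : u ≠ 0 := by grind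
      refine ⟨mkPoint u ((y + u ^ 3 + b) / u) (by field_simp; grind), ?_⟩
      rw [frobeniusHom_mkPoint, mkPoint_inj]
      refine ⟨by grind, ?_⟩
      field_simp
      grind

theorem isSquare_xClass_two_nsmul (P : (E (b ^ 2)).Point) : IsSquare (xClass (2 • P)) := by
  induction P using point_cases with
  | zero => exact ⟨1, (mul_one 1).symm⟩
  | affine x y h =>
    by_cases hx : x = 0
    · subst hx
      rw [two_nsmul_mkPoint_zero]
      exact ⟨1, (mul_one 1).symm⟩
    · obtain ⟨h₃, hdbl⟩ := exists_two_nsmul_mkPoint h hx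
      rw [hdbl]
      by_cases hx₃ : x ^ 2 + b ^ 2 / x ^ 2 = 0
      · refine ⟨x, ?_⟩
        simp only [hx₃, xClass_mkPoint_zero]
        grind
      · exact ⟨x + b / x, by rw [xClass_mkPoint _ hx₃]; field_simp; grind⟩

theorem isSquare_xClass_zero_mul_mul_add {x y y₀ : F} (h : y ^ 2 + x * y = x ^ 3 + b ^ 2)
    (h₀ : y₀ ^ 2 + 0 * y₀ = 0 ^ 3 + b ^ 2) (hx : x ≠ 0) :
    IsSquare (xClass (mkPoint 0 y₀ h₀) * xClass (mkPoint x y h) *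
      xClass (mkPoint 0 y₀ h₀ + mkPoint x y h)) := by
  obtain ⟨x₃, y₃, h₃, hadd, hx₃⟩ := exists_mkPoint_add_mkPoint h₀ h hx.symm
  have hx₃' : x₃ = b / x := by
    have hy₀ : y₀ = b := by grind
    rw [hx₃, hy₀, zero_add, add_zero]
    field_simp
    grind
  have hx₃₀ : x₃ ≠ 0 := hx₃' ▸ div_ne_zero (NeZero.ne b) hx
  rw [hadd, xClass_mkPoint_zero, xClass_mkPoint _ hx, xClass_mkPoint _ hx₃₀, hx₃']
  exact ⟨b, by field_simp⟩

-- The three points lie on a line `y = λ x + ν`, so their `x`-coordinates have product `(ν + b)²`.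
theorem isSquare_xClass_mul_mul_add_of_ne {x y x' y' : F} (h : y ^ 2 + x * y = x ^ 3 + b ^ 2)
    (h' : y' ^ 2 + x' * y' = x' ^ 3 + b ^ 2) (hx : x ≠ 0) (hx' : x' ≠ 0) (hxx' : x ≠ x') :
    IsSquare (xClass (mkPoint x y h) * xClass (mkPoint x' y' h') *
      xClass (mkPoint x y h + mkPoint x' y' h')) := by
  obtain ⟨x₃, y₃, h₃, hadd, hx₃⟩ := exists_mkPoint_add_mkPoint h h' hxx'
  have hd : x + x' ≠ 0 := by rwa [← CharTwo.sub_eq_add, sub_ne_zero]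
  obtain ⟨l, hl⟩ : ∃ l, l = (y + y') / (x + x') := ⟨_, rfl⟩
  rw [← hl] at hx₃
  have hy' : y' = y + l * (x + x') := by
    rw [hl]
    field_simp
    grind
  have hsecant : x * x' + (x + x') * x₃ = y + l * x := by
    apply mul_left_cancel₀ hd
    grind
  rw [hadd, xClass_mkPoint _ hx, xClass_mkPoint _ hx']
  by_cases hx₃₀ : x₃ = 0
  · subst hx₃₀
    rw [xClass_mkPoint_zero]
    exact ⟨b, by grind⟩
  · rw [xClass_mkPoint _ hx₃₀]
    exact ⟨y + l * x + b, by clear * - h hx₃ hsecant; grind⟩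

theorem isSquare_xClass_mul_mul_add (P Q : (E (b ^ 2)).Point) :
    IsSquare (xClass P * xClass Q * xClass (P + Q)) := by
  induction P using point_cases with
  | zero => exact ⟨xClass Q, by rw [zero_add, xClass_zero, one_mul]⟩
  | affine x y h =>
  induction Q using point_cases with
  | zero => exact ⟨xClass (mkPoint x y h), by rw [add_zero, xClass_zero, mul_one]⟩
  | affine x' y' h' =>
  rcases eq_or_ne x x' with rfl | hxx'
  · rcases mkPoint_eq_or_eq_neg h h' with heq | heq
    · rw [heq, ← two_nsmul]
      exact (IsSquare.mul_self _).mul (isSquare_xClass_two_nsmul _)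
    · rw [heq, neg_add_cancel, xClass_neg, xClass_zero, mul_one]
      exact IsSquare.mul_self _
  rcases eq_or_ne x 0 with rfl | hx
  · exact isSquare_xClass_zero_mul_mul_add h' h hxx'.symm
  rcases eq_or_ne x' 0 with rfl | hx'
  · rw [mul_comm (xClass (mkPoint x y h)), add_comm]
    exact isSquare_xClass_zero_mul_mul_add h h' hx
  exact isSquare_xClass_mul_mul_add_of_ne h h' hx hx' hxx'

theorem add_mem_range_frobeniusHom {P Q : (E (b ^ 2)).Point}
    (hPQ : IsSquare (xClass P * xClass Q)) : P + Q ∈ (frobeniusHom b).range := by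
  apply mem_range_frobeniusHom_of_isSquare_xClass
  have hdiv := (isSquare_xClass_mul_mul_add P Q).div hPQ
  rwa [mul_div_cancel_left₀ _ (mul_ne_zero (xClass_ne_zero P) (xClass_ne_zero Q))] at hdiv

theorem range_frobeniusHom_sup_eq_top {H : AddSubgroup (E (b ^ 2)).Point}
    (hH : ∀ P : (E (b ^ 2)).Point, ∃ Q ∈ H, IsSquare (xClass P * xClass Q)) :
    (frobeniusHom b).range ⊔ H = ⊤ := by
  refine eq_top_iff.2 fun P _ => ?_
  obtain ⟨Q, hQ, hPQ⟩ := hH P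
  rw [← add_sub_cancel_right P Q, sub_eq_add_neg]
  exact AddSubgroup.add_mem_sup (add_mem_range_frobeniusHom hPQ) (neg_mem hQ)

end E

theorem natDegree_add_eq_max {R : Type*} [Semiring R] {p q : R[X]}
    (h : p.natDegree ≠ q.natDegree) : (p + q).natDegree = max p.natDegree q.natDegree := by
  rcases lt_or_gt_of_ne h with hlt | hlt
  · rw [natDegree_add_eq_right_of_natDegree_lt hlt, max_eq_right hlt.le]
  · rw [natDegree_add_eq_left_of_natDegree_lt hlt, max_eq_left hlt.le]

section SquareClass

variable {κ : Type*} [Field κ]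

theorem isRoot_of_odd_rootMultiplicity_of_mul_eq_sq {p w z : κ[X]} {a : κ}
    (ha : Odd (p.rootMultiplicity a)) (h : p * w = z ^ 2) : w.IsRoot a := by
  by_cases hw : w = 0
  · simp [hw]
  have hp : p ≠ 0 := by
    rintro rfl
    simp at ha
  have hz : z ≠ 0 := by
    rintro rfl
    simp_all
  have hmult := congrArg (rootMultiplicity a) h
  rw [rootMultiplicity_mul (mul_ne_zero hp hw), sq,
    rootMultiplicity_mul (mul_ne_zero hz hz)] at hmult
  refine (rootMultiplicity_pos hw).1 ?_
  grind

theorem natDegree_prod_X_sub_C_mul_sq (t : Finset κ) {u : κ[X]} (hu : u ≠ 0) :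
    ((∏ a ∈ t, (X - C a)) * u ^ 2).natDegree = t.card + 2 * u.natDegree := by
  rw [(monic_prod_X_sub_C _ t).natDegree_mul' (pow_ne_zero 2 hu), natDegree_pow,
    natDegree_prod_of_monic _ _ fun a _ => monic_X_sub_C a]
  simp

variable [IsAlgClosed κ]

theorem exists_eq_prod_odd_rootMultiplicity_mul_sq [DecidableEq κ] (p : κ[X]) :
    ∃ u : κ[X], p =
      (∏ a ∈ p.roots.toFinset with Odd (p.rootMultiplicity a), (X - C a)) * u ^ 2 := by
  obtain ⟨e, he⟩ := IsAlgClosed.exists_pow_nat_eq p.leadingCoeff two_pos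
  refine ⟨C e * ∏ a ∈ p.roots.toFinset, (X - C a) ^ (p.rootMultiplicity a / 2), ?_⟩
  conv_lhs => rw [(IsAlgClosed.splits p).eq_prod_roots, ← he, prod_multiset_root_eq_finset_root]
  rw [Finset.prod_filter, mul_pow, ← Finset.prod_pow, mul_left_comm, ← Finset.prod_mul_distrib,
    C_pow]
  congr 1
  refine Finset.prod_congr rfl fun a _ => ?_
  rw [← pow_mul]
  split_ifs with hodd
  · rw [← pow_succ', Nat.div_two_mul_two_add_one_of_odd hodd]
  · rw [one_mul, Nat.div_two_mul_two_of_even (Nat.not_odd_iff_even.1 hodd)]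

theorem exists_eq_prod_X_sub_C_mul_sq {p w z : κ[X]} (hp : p ≠ 0) (h : p * w = z ^ 2) :
    ∃ t : Finset κ, (∀ a ∈ t, p.IsRoot a ∧ w.IsRoot a) ∧
      ∃ u : κ[X], p = (∏ a ∈ t, (X - C a)) * u ^ 2 := by
  classical
  refine ⟨_, fun a ha => ?_, exists_eq_prod_odd_rootMultiplicity_mul_sq p⟩
  rw [Finset.mem_filter, Multiset.mem_toFinset, mem_roots hp] at ha
  exact ⟨ha.1, isRoot_of_odd_rootMultiplicity_of_mul_eq_sq ha.2 h⟩

end SquareClass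

section LowestTerms

variable {κ : Type*} [Field κ]

local notation "φ" => algebraMap κ[X] (RatFunc κ)

theorem exists_eq_num_div_denom_sq {B : κ[X]} {x y : RatFunc κ}
    (h : y ^ 2 + x * y = x ^ 3 + φ B) :
    ∃ r : κ[X], y = φ r / φ x.denom ^ 2 ∧
      r ^ 2 + x.num * x.denom * r = x.denom * (x.num ^ 3 + B * x.denom ^ 3) := by
  have hd : φ x.denom ≠ 0 := RatFunc.algebraMap_ne_zero x.denom_ne_zero
  have hx : x * φ x.denom = φ x.num := (eq_div_iff hd).1 (RatFunc.num_div_denom x).symm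
  have hy : (y * φ x.denom ^ 2) ^ 2 + φ (x.num * x.denom) * (y * φ x.denom ^ 2) =
      φ (x.denom * (x.num ^ 3 + B * x.denom ^ 3)) := by
    simp only [map_mul, map_add, map_pow, ← hx]
    linear_combination (φ x.denom) ^ 4 * h
  have hint : _root_.IsIntegral κ[X] (y * φ x.denom ^ 2) := by
    refine ⟨X ^ 2 + C (x.num * x.denom) * X - C (x.denom * (x.num ^ 3 + B * x.denom ^ 3)),
      by monicity!, ?_⟩
    simp only [eval₂_sub, eval₂_add, eval₂_mul, eval₂_pow, eval₂_X, eval₂_C]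
    exact sub_eq_zero.2 hy
  obtain ⟨r, hr⟩ := IsIntegrallyClosed.isIntegral_iff.1 hint
  refine ⟨r, by rw [eq_div_iff (pow_ne_zero 2 hd), hr], RatFunc.algebraMap_injective κ ?_⟩
  simpa only [map_mul, map_add, map_pow, hr] using hy

variable [IsAlgClosed κ]

theorem exists_lowest_terms {B : κ[X]} {x y : RatFunc κ} (h : y ^ 2 + x * y = x ^ 3 + φ B) :
    ∃ a q r : κ[X], q ≠ 0 ∧ IsCoprime a q ∧ x = φ a / φ q ^ 2 ∧ y = φ r / φ q ^ 3 ∧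
      r ^ 2 + a * q * r = a ^ 3 + B * q ^ 6 := by
  obtain ⟨r, hy, hr⟩ := exists_eq_num_div_denom_sq h
  have hmul : x.denom * (x.num ^ 3 + B * x.denom ^ 3 - x.num * r) = r ^ 2 := by
    linear_combination -hr
  have hcop := x.isCoprime_num_denom
  obtain ⟨t, ht, q, hq⟩ := exists_eq_prod_X_sub_C_mul_sq x.denom_ne_zero hmul
  have ht₀ : t = ∅ := Finset.eq_empty_of_forall_notMem fun c hc => by
    obtain ⟨hd, hw⟩ := ht c hc
    have hr₀ : eval c r = 0 := by simpa [hd.eq_zero] using congrArg (eval c) hr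
    have hn : eval c x.num = 0 := by simpa [hd.eq_zero, hr₀] using hw
    simpa [hn, hd.eq_zero] using hcop.map (evalRingHom c)
  rw [ht₀, Finset.prod_empty, one_mul] at hq
  have hq₀ : q ≠ 0 := by
    rintro rfl
    exact x.denom_ne_zero (by simpa using hq)
  have hqr : q ∣ r := by
    rw [← IsIntegrallyClosed.pow_dvd_pow_iff two_ne_zero, ← hmul, ← hq]
    exact dvd_mul_right _ _
  obtain ⟨r', rfl⟩ := hqr
  have hφq : φ q ≠ 0 := RatFunc.algebraMap_ne_zero hq₀
  refine ⟨x.num, q, r', hq₀, ?_, ?_, ?_, ?_⟩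
  · rwa [hq, IsCoprime.pow_right_iff two_pos] at hcop
  · conv_lhs => rw [← RatFunc.num_div_denom x, hq, map_pow]
  · rw [hy, hq, map_mul, map_pow]
    field_simp
  · apply mul_left_cancel₀ (pow_ne_zero 2 hq₀)
    rw [hq] at hr
    linear_combination hr

end LowestTerms

section XClass

variable {κ : Type*} [Field κ] [CharP κ 2]

local notation "φ" => algebraMap κ[X] (RatFunc κ)

instance : CharP (RatFunc κ) 2 :=
  charP_of_injective_algebraMap (RatFunc.algebraMap_injective κ) 2

theorem even_natDegree_of_lowest_terms {a b q r : κ[X]} (ha : a ≠ 0) (hq : q ≠ 0) (hb : b ≠ 0)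
    (hb₄ : 4 ∣ b.natDegree) (h : r ^ 2 + a * q * r = a ^ 3 + b ^ 2 * q ^ 6) :
    Even a.natDegree := by
  by_contra hodd
  obtain ⟨m, hm⟩ := Nat.not_even_iff_odd.1 hodd
  obtain ⟨l, hl⟩ := hb₄
  obtain ⟨z, hz⟩ : ∃ z, z = r + b * q ^ 3 := ⟨_, rfl⟩
  have hza : z ^ 2 + a * q * z = a * (a ^ 2 + b * q ^ 4) := by grind
  have haa : (a ^ 2).natDegree = 2 * a.natDegree := natDegree_pow _ _
  have hbq : (b * q ^ 4).natDegree = 4 * l + 4 * q.natDegree := by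
    rw [natDegree_mul hb (pow_ne_zero 4 hq), natDegree_pow, hl]
  have hne : (a ^ 2).natDegree ≠ (b * q ^ 4).natDegree := by omega
  have hsum : (a ^ 2 + b * q ^ 4).natDegree = max (2 * a.natDegree) (4 * l + 4 * q.natDegree) := by
    rw [natDegree_add_eq_max hne, haa, hbq]
  have hsum₀ : a ^ 2 + b * q ^ 4 ≠ 0 := fun h₀ => by simp [h₀] at hsum; omega
  have hdeg := congrArg natDegree hza
  rw [natDegree_mul ha hsum₀, hsum] at hdeg
  have haqz : (a * q * z).natDegree ≤ a.natDegree + q.natDegree + z.natDegree :=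
    natDegree_mul_le.trans (Nat.add_le_add_right natDegree_mul_le _)
  have hzz : (z ^ 2).natDegree = 2 * z.natDegree := natDegree_pow _ _
  rcases le_or_gt z.natDegree (a.natDegree + q.natDegree) with hle | hgt
  · have := natDegree_add_le (z ^ 2) (a * q * z)
    omega
  · rw [natDegree_add_eq_left_of_natDegree_lt (by omega)] at hdeg
    omega

variable [IsAlgClosed κ]

theorem exists_isSquare_mul_prod_of_equation {b : κ[X]} (hb : b ≠ 0) {x y : RatFunc κ}
    (hx : x ≠ 0) (h : y ^ 2 + x * y = x ^ 3 + φ b ^ 2) :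
    ∃ t : Finset κ, (∀ a ∈ t, b.IsRoot a) ∧ (4 ∣ b.natDegree → Even t.card) ∧
      IsSquare (x * φ (∏ a ∈ t, (X - C a))) := by
  rw [← map_pow] at h
  obtain ⟨a, q, r, hq, hcop, hxa, -, hr⟩ := exists_lowest_terms h
  have ha : a ≠ 0 := by
    rintro rfl
    simp [hxa] at hx
  have hsq : a * (a ^ 2 + q * r) = (r + b * q ^ 3) ^ 2 := by grind
  obtain ⟨t, ht, u, hu⟩ := exists_eq_prod_X_sub_C_mul_sq ha hsq
  have hu₀ : u ≠ 0 := by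
    rintro rfl
    simp [hu] at ha
  refine ⟨t, fun c hc => ?_, fun hb₄ => ?_, ⟨φ (∏ a ∈ t, (X - C a)) * φ u / φ q, ?_⟩⟩
  · obtain ⟨hac, hwc⟩ := ht c hc
    have hqc : eval c q ≠ 0 := fun h₀ => by
      simpa [hac.eq_zero, h₀] using hcop.map (evalRingHom c)
    have hrc : eval c r = 0 := by simpa [hac.eq_zero, hqc] using hwc
    simpa [hac.eq_zero, hrc, hqc] using congrArg (eval c) hr
  · have heven := even_natDegree_of_lowest_terms ha hq hb hb₄ hr
    rw [hu, natDegree_prod_X_sub_C_mul_sq t hu₀] at heven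
    grind
  · rw [hxa, hu, map_mul, map_pow]
    ring

theorem exists_isSquare_xClass_mul_prod [DecidableEq (RatFunc κ)] {b : κ[X]} {β : RatFunc κ}
    [NeZero β] (hβ : φ b = β) (P : (E (β ^ 2)).Point) :
    ∃ t : Finset κ, (∀ a ∈ t, b.IsRoot a) ∧ (4 ∣ b.natDegree → Even t.card) ∧
      IsSquare (xClass P * φ (∏ a ∈ t, (X - C a))) := by
  have hb : b ≠ 0 := by
    rintro rfl
    exact NeZero.ne β (by simp [← hβ])
  induction P using point_cases with
  | zero => exact ⟨∅, by simp, by simp, 1, by simp [xClass_zero]⟩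
  | affine x y h =>
    by_cases hx : x = 0
    · subst hx
      obtain ⟨t, ht, u, hu⟩ := exists_eq_prod_X_sub_C_mul_sq hb (sq b).symm
      have hu₀ : u ≠ 0 := by
        rintro rfl
        simp [hu] at hb
      have hdeg := natDegree_prod_X_sub_C_mul_sq t hu₀
      refine ⟨t, fun a ha => (ht a ha).1, fun hb₄ => by grind, φ (∏ a ∈ t, (X - C a)) * φ u, ?_⟩
      rw [xClass_mkPoint_zero, ← hβ]
      conv_lhs => rw [hu, map_mul, map_pow]
      ring
    · rw [xClass_mkPoint h hx]
      exact exists_isSquare_mul_prod_of_equation hb hx (hβ ▸ h)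

end XClass

section ArtinSchreier

variable {κ : Type*} [Field κ]

local notation "φ" => algebraMap κ[X] (RatFunc κ)

theorem natDegree_add_two_mul_le_of_odd {g : κ[X]} (hg : Odd g.natDegree) {q : κ[X]} (hq : q ≠ 0)
    (u : κ[X]) : g.natDegree + 2 * q.natDegree ≤ (u ^ 2 + u * q + g * q ^ 2).natDegree := by
  have hg₀ : g ≠ 0 := by
    rintro rfl
    simp at hg
  obtain ⟨m, hm⟩ := hg
  have hgq : (g * q ^ 2).natDegree = g.natDegree + 2 * q.natDegree := by
    rw [natDegree_mul hg₀ (pow_ne_zero 2 hq), natDegree_pow]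
  have huu : (u ^ 2).natDegree = 2 * u.natDegree := natDegree_pow _ _
  have huq : (u * q).natDegree ≤ u.natDegree + q.natDegree := natDegree_mul_le
  have hsum : (u ^ 2 + g * q ^ 2).natDegree =
      max (2 * u.natDegree) (g.natDegree + 2 * q.natDegree) := by
    rw [natDegree_add_eq_max (by omega), huu, hgq]
  rw [add_right_comm, natDegree_add_eq_left_of_natDegree_lt (by omega), hsum]
  exact le_max_right _ _

variable [IsAlgClosed κ]

theorem exists_sq_add_self_eq (c : κ) : ∃ e : κ, e ^ 2 + e = c := by
  have hdeg : (X ^ 2 + X - C c : κ[X]).degree = 2 := by compute_degree!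
  obtain ⟨e, he⟩ := IsAlgClosed.exists_root (X ^ 2 + X - C c : κ[X]) (by simp [hdeg])
  exact ⟨e, by simpa [sub_eq_zero] using he⟩

variable [CharP κ 2]

theorem exists_eq_sq_add_self_add (g : κ[X]) :
    ∃ h g' : κ[X], g = h ^ 2 + h + g' ∧ (g' = 0 ∨ Odd g'.natDegree) := by
  induction hn : g.natDegree using Nat.strong_induction_on generalizing g with
  | _ n ih =>
  rcases Nat.even_or_odd g.natDegree with ⟨m, hm⟩ | hodd
  swap
  · exact ⟨0, g, by simp, .inr hodd⟩
  by_cases hg : g.natDegree = 0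
  · obtain ⟨c, rfl⟩ := natDegree_eq_zero.1 hg
    obtain ⟨e, rfl⟩ := exists_sq_add_self_eq c
    exact ⟨C e, 0, by simp, .inl rfl⟩
  obtain ⟨e, he⟩ := IsAlgClosed.exists_pow_nat_eq g.leadingCoeff two_pos
  have hlead : g = g.eraseLead + (C e * X ^ m) ^ 2 := by
    conv_lhs => rw [← g.eraseLead_add_C_mul_X_pow, ← he, hm, C_pow]
    ring
  have hlt : (g.eraseLead + C e * X ^ m).natDegree < n := by
    have hle := natDegree_add_le g.eraseLead (C e * X ^ m)
    have herase := g.eraseLead_natDegree_le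
    have hmon := natDegree_C_mul_X_pow_le e m
    omega
  obtain ⟨h, g', hg', hcase⟩ := ih _ hlt _ rfl
  exact ⟨h + C e * X ^ m, g', by grind, hcase⟩

-- Writing `r = m q + c a`, the equation shows `q² ∣ c² + c q + a`.
theorem exists_eq_sq_add_mul_add_mul_sq {a q r B : κ[X]} (hcop : IsCoprime a q)
    (h : r ^ 2 + a * q * r = a ^ 3 + B * q ^ 6) :
    ∃ u g : κ[X], a = u ^ 2 + u * q + g * q ^ 2 ∧ (g = 0 ∨ Odd g.natDegree) := by
  obtain ⟨c, m, rfl⟩ : ∃ c m, r = m * q + c * a := by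
    obtain ⟨c₀, m₀, hcm⟩ := hcop
    exact ⟨r * c₀, r * m₀, by linear_combination -r * hcm⟩
  have hmul : a ^ 2 * (c ^ 2 + c * q + a) = q ^ 2 * (m ^ 2 + a * m + B * q ^ 4) := by grind
  obtain ⟨g, hg⟩ : q ^ 2 ∣ c ^ 2 + c * q + a :=
    hcop.symm.pow.dvd_of_dvd_mul_left ⟨_, hmul⟩
  obtain ⟨f, g', hg', hcase⟩ := exists_eq_sq_add_self_add g
  exact ⟨c + f * q, g', by grind, hcase⟩

theorem exists_sq_add_self_eq_of_equation {B : κ[X]} (hB : B.natDegree < 3) {x y : RatFunc κ}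
    (h : y ^ 2 + x * y = x ^ 3 + φ B) : ∃ w : RatFunc κ, w ^ 2 + w = x := by
  obtain ⟨a, q, r, hq, hcop, rfl, -, hr⟩ := exists_lowest_terms h
  obtain ⟨u, g, ha, rfl | hodd⟩ := exists_eq_sq_add_mul_add_mul_sq hcop hr
  · have hφq : φ q ≠ 0 := RatFunc.algebraMap_ne_zero hq
    refine ⟨φ u / φ q, ?_⟩
    simp only [ha, map_add, map_mul, map_pow, map_zero]
    field_simp
    ring
  · exfalso
    have hgpos := hodd.pos
    have hdeg := natDegree_add_two_mul_le_of_odd hodd hq u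
    rw [← ha] at hdeg
    have ha₀ : a ≠ 0 := by
      rintro rfl
      rw [natDegree_zero] at hdeg
      omega
    have hdeg' := natDegree_add_two_mul_le_of_odd hodd (mul_ne_zero hq ha₀) (r + u * a)
    have hBq : (r + u * a) ^ 2 + (r + u * a) * (q * a) + g * (q * a) ^ 2 = B * q ^ 6 := by grind
    have hle : (B * q ^ 6).natDegree ≤ B.natDegree + 6 * q.natDegree :=
      natDegree_mul_le.trans_eq (by rw [natDegree_pow])
    rw [hBq, natDegree_mul hq ha₀] at hdeg'
    omega

end ArtinSchreier

section Height

variable {κ : Type*} [Field κ]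

local notation "φ" => algebraMap κ[X] (RatFunc κ)

theorem natDegree_num_denom_of_isCoprime {a d : κ[X]} (hd : d ≠ 0)
    (hcop : IsCoprime a d) :
    (φ a / φ d).num.natDegree = a.natDegree ∧ (φ a / φ d).denom.natDegree = d.natDegree := by
  set x := φ a / φ d
  have hcross : x.num * d = a * x.denom := by
    apply RatFunc.algebraMap_injective κ
    rw [map_mul, map_mul, ← div_eq_div_iff (RatFunc.algebraMap_ne_zero x.denom_ne_zero)
      (RatFunc.algebraMap_ne_zero hd), RatFunc.num_div_denom]
  have hnum : Associated x.num a := associated_of_dvd_dvd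
    (x.isCoprime_num_denom.dvd_of_dvd_mul_right ⟨d, hcross.symm⟩)
    (hcop.dvd_of_dvd_mul_right ⟨x.denom, hcross⟩)
  have hdenom : Associated x.denom d := associated_of_dvd_dvd
    (x.isCoprime_num_denom.symm.dvd_of_dvd_mul_left (hcross ▸ dvd_mul_left _ _))
    (hcop.symm.dvd_of_dvd_mul_left (hcross ▸ dvd_mul_left _ _))
  exact ⟨natDegree_eq_of_degree_eq (degree_eq_degree_of_associated hnum),
    natDegree_eq_of_degree_eq (degree_eq_degree_of_associated hdenom)⟩

/-- The naive height of a rational function: its degree as a self-map of the projective line. -/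
noncomputable def height (x : RatFunc κ) : ℕ := max x.num.natDegree x.denom.natDegree

theorem natDegree_num_le_height (x : RatFunc κ) : x.num.natDegree ≤ height x := le_max_left _ _

theorem dvd_of_dvd_mul_of_dvd_mul {a d n z : κ[X]} (h : IsCoprime a d) (ha : n ∣ a * z)
    (hd : n ∣ d * z) : n ∣ z := by
  obtain ⟨u, v, huv⟩ := h
  rw [show z = u * (a * z) + v * (d * z) by linear_combination -z * huv]
  exact dvd_add (ha.mul_left u) (hd.mul_left v)

-- Gauss's lemma for the product of the primitive polynomials `d T + a` and `d' T + a'`.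
theorem mul_dvd_of_dvd_of_dvd {a d a' d' z : κ[X]} (hd : d ≠ 0) (h : IsCoprime a d)
    (h' : IsCoprime a' d') (hadd : d * d' ∣ (a * d' + a' * d) * z) (hmul : d * d' ∣ a * a' * z) :
    d * d' ∣ z := by
  obtain ⟨w, rfl⟩ : d ∣ z := by
    refine dvd_of_dvd_mul_of_dvd_mul h' (h.symm.dvd_of_dvd_mul_left ?_)
      (h.symm.dvd_of_dvd_mul_left ?_)
    · rw [← mul_assoc]
      exact (dvd_mul_right _ _).trans hmul
    · have := (dvd_mul_right d d').trans hadd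
      rwa [add_mul, dvd_add_left (Dvd.intro_left (a' * z) (by ring)), mul_assoc] at this
  rw [mul_left_comm, mul_dvd_mul_iff_left hd] at hadd hmul
  refine mul_dvd_mul_left d (dvd_of_dvd_mul_of_dvd_mul h (h'.symm.dvd_of_dvd_mul_left ?_)
    (h'.symm.dvd_of_dvd_mul_left ?_))
  · rwa [← mul_assoc, mul_comm a']
  · rwa [add_mul, dvd_add_right (Dvd.intro_left (a * w) (by ring)), mul_assoc] at hadd

theorem isCoprime_of_squarefree {a q r B : κ[X]} (hB : Squarefree B) (hcop : IsCoprime a q)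
    (h : r ^ 2 + a * q * r = a ^ 3 + B * q ^ 6) : IsCoprime a B := by
  refine isCoprime_of_prime_dvd (fun h₀ => hB.ne_zero h₀.2) fun p hp ⟨a', ha⟩ hpB => ?_
  have hpr : p ∣ r := hp.dvd_of_dvd_pow (n := 2) <| by
    rw [show r ^ 2 = p * (a' * (a ^ 2 - q * r)) + B * q ^ 6 by
      linear_combination h + (a ^ 2 - q * r) * ha]
    exact dvd_add (dvd_mul_right _ _) (hpB.mul_right _)
  obtain ⟨r', rfl⟩ := hpr
  subst ha
  have hpp : p * p ∣ B * q ^ 6 := ⟨r' ^ 2 + a' * q * r' - p * a' ^ 3, by linear_combination -h⟩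
  have hpq : IsCoprime (p * p) (q ^ 6) := by
    have := hcop.of_mul_left_left
    exact (this.mul_left this).pow_right
  exact hp.not_isUnit (hB p (hpq.dvd_of_dvd_mul_right hpp))

theorem natDegree_num_sq_add_div_sq [IsAlgClosed κ] {B : κ[X]} (hB : Squarefree B)
    (hdeg : ¬ 4 ∣ B.natDegree) {x y : RatFunc κ} (hx : x ≠ 0)
    (h : y ^ 2 + x * y = x ^ 3 + φ B) :
    (x ^ 2 + φ B / x ^ 2).num.natDegree =
      max (4 * x.num.natDegree) (B.natDegree + 4 * x.denom.natDegree) := by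
  obtain ⟨a, q, r, hq, hcop, hxa, -, hr⟩ := exists_lowest_terms h
  have ha : a ≠ 0 := by
    rintro rfl
    simp [hxa] at hx
  have haB := isCoprime_of_squarefree hB hcop hr
  have hcop₂ : IsCoprime (a ^ 4 + B * q ^ 8) (a ^ 2 * q ^ 4) := by
    refine .mul_right (.pow_right ?_) (.pow_right ?_)
    · rw [show a ^ 4 + B * q ^ 8 = B * q ^ 8 + a * a ^ 3 by ring, IsCoprime.add_mul_left_left_iff]
      exact haB.symm.mul_left hcop.symm.pow_left
    · rw [show a ^ 4 + B * q ^ 8 = a ^ 4 + q * (B * q ^ 7) by ring,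
        IsCoprime.add_mul_left_left_iff]
      exact hcop.pow_left
  have hBq : (B * q ^ 8).natDegree = B.natDegree + 8 * q.natDegree := by
    rw [natDegree_mul hB.ne_zero (pow_ne_zero 8 hq), natDegree_pow]
  have hx₂ : x ^ 2 + φ B / x ^ 2 = φ (a ^ 4 + B * q ^ 8) / φ (a ^ 2 * q ^ 4) := by
    have hφa : φ a ≠ 0 := RatFunc.algebraMap_ne_zero ha
    have hφq : φ q ≠ 0 := RatFunc.algebraMap_ne_zero hq
    simp only [hxa, map_add, map_mul, map_pow]
    field_simp
  obtain ⟨hnum, hdenom⟩ := natDegree_num_denom_of_isCoprime (pow_ne_zero 2 hq) hcop.pow_right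
  rw [map_pow, ← hxa] at hnum hdenom
  rw [hx₂, (natDegree_num_denom_of_isCoprime
    (mul_ne_zero (pow_ne_zero 2 ha) (pow_ne_zero 4 hq)) hcop₂).1, hnum, hdenom,
    natDegree_add_eq_max (by rw [natDegree_pow]; omega), hBq, natDegree_pow, natDegree_pow]
  ring_nf

theorem natDegree_num_add_natDegree_num_le {B : κ[X]} {x x₃ x₄ : RatFunc κ} (hx : x + 1 ≠ 0)
    (hadd : (x₃ + x₄) * (x + 1) ^ 2 = x) (hmul : x₃ * x₄ * (x + 1) ^ 2 = x ^ 2 + φ B)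
    (hx₃ : x₃ ≠ 0) (hx₄ : x₄ ≠ 0) :
    x₃.num.natDegree + x₄.num.natDegree ≤ 2 * height x + B.natDegree := by
  have hφ {z : RatFunc κ} : φ z.denom ≠ 0 := RatFunc.algebraMap_ne_zero z.denom_ne_zero
  have hnum (z : RatFunc κ) : φ z.num = z * φ z.denom := by
    rw [← div_eq_iff hφ, RatFunc.num_div_denom]
  have hadd' : (x₃.num * x₄.denom + x₄.num * x₃.denom) * (x.num + x.denom) ^ 2 =
      x₃.denom * x₄.denom * (x.num * x.denom) := by
    apply RatFunc.algebraMap_injective κ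
    simp only [map_mul, map_add, map_pow, hnum]
    linear_combination φ x₃.denom * φ x₄.denom * φ x.denom ^ 2 * hadd
  have hmul' : x₃.num * x₄.num * (x.num + x.denom) ^ 2 =
      x₃.denom * x₄.denom * (x.num ^ 2 + B * x.denom ^ 2) := by
    apply RatFunc.algebraMap_injective κ
    simp only [map_mul, map_add, map_pow, hnum]
    linear_combination φ x₃.denom * φ x₄.denom * φ x.denom ^ 2 * hmul
  obtain ⟨e, he⟩ := mul_dvd_of_dvd_of_dvd x₃.denom_ne_zero x₃.isCoprime_num_denom
    x₄.isCoprime_num_denom ⟨_, hadd'⟩ ⟨_, hmul'⟩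
  have he₀ : e ≠ 0 := by
    rintro rfl
    have := congrArg φ (pow_eq_zero_iff two_ne_zero |>.1 (he.trans (mul_zero _)))
    simp only [map_add, map_zero, hnum] at this
    exact mul_ne_zero hx hφ (by linear_combination this)
  have hprod : x₃.num * x₄.num * e = x.num ^ 2 + B * x.denom ^ 2 := by
    apply mul_left_cancel₀ (mul_ne_zero x₃.denom_ne_zero x₄.denom_ne_zero)
    rw [← hmul', he]
    ring
  have hx₃' := RatFunc.num_ne_zero hx₃
  have hx₄' := RatFunc.num_ne_zero hx₄
  have hdeg := congrArg natDegree hprod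
  rw [natDegree_mul (mul_ne_zero hx₃' hx₄') he₀, natDegree_mul hx₃' hx₄'] at hdeg
  have hle : (x.num ^ 2 + B * x.denom ^ 2).natDegree ≤
      max (2 * x.num.natDegree) (B.natDegree + 2 * x.denom.natDegree) :=
    (natDegree_add_le _ _).trans (max_le_max natDegree_pow_le
      (natDegree_mul_le.trans (Nat.add_le_add_left natDegree_pow_le _)))
  rw [height]
  omega

end Height

theorem isSquare_of_isSquare_mul_sq {F : Type*} [Field F] {a c : F} (hc : c ≠ 0)
    (h : IsSquare (a * c ^ 2)) : IsSquare a := by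
  simpa [hc] using h.div (IsSquare.sq c)

section ParameterS

variable (κ : Type*) [Field κ]

local notation "φ" => algebraMap κ[X] (RatFunc κ)

variable {κ} in
theorem not_isSquare_algebraMap_of_squarefree {B : κ[X]} (hB : Squarefree B)
    (hdeg : B.natDegree ≠ 0) : ¬ IsSquare (φ B) := by
  rintro ⟨y, hy⟩
  obtain ⟨p, rfl⟩ := IsIntegrallyClosed.exists_algebraMap_eq_of_isIntegral_pow (R := κ[X])
    (x := y) two_pos (by rw [sq, ← hy]; exact isIntegral_algebraMap)
  rw [← map_mul, (RatFunc.algebraMap_injective κ).eq_iff] at hy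
  obtain ⟨c, -, rfl⟩ := Polynomial.isUnit_iff.1 (hB p ⟨1, by rw [hy, mul_one]⟩)
  exact hdeg (by rw [hy, ← C_mul, natDegree_C])

/-- The rational function `s = t² + t`, where `t` is `RatFunc.X`. -/
noncomputable def s : RatFunc κ := RatFunc.X ^ 2 + RatFunc.X

theorem algebraMap_X_sq_add_X : φ (X ^ 2 + X) = s κ := by
  simp [s]

theorem natDegree_X_sq_add_X : (X ^ 2 + X : κ[X]).natDegree = 2 := by
  compute_degree!

instance : NeZero (s κ) := ⟨by
  rw [← algebraMap_X_sq_add_X]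
  refine RatFunc.algebraMap_ne_zero (ne_zero_of_natDegree_gt (n := 0) ?_)
  simp [natDegree_X_sq_add_X]⟩

variable [CharP κ 2]

theorem squarefree_X_sq_add_X : Squarefree (X ^ 2 + X : κ[X]) := by
  refine Separable.squarefree ?_
  have hderiv : derivative (X ^ 2 + X : κ[X]) = 1 := by
    simp [one_add_one_eq_two, CharTwo.two_eq_zero]
  rw [separable_def, hderiv]
  exact isCoprime_one_right

variable {κ}

theorem ne_zero_of_equation_s {x y : RatFunc κ} (h : y ^ 2 + x * y = x ^ 3 + s κ) : x ≠ 0 := by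
  rintro rfl
  refine not_isSquare_algebraMap_of_squarefree (squarefree_X_sq_add_X κ) ?_ ⟨y, ?_⟩
  · simp [natDegree_X_sq_add_X]
  · rw [algebraMap_X_sq_add_X]
    linear_combination -h

end ParameterS

section Points

variable {κ : Type*} [Field κ]

/-- The naive height of the `x`-coordinate of a point, with value `0` at the zero point. -/
noncomputable def pointHeight {b : RatFunc κ} : (E b).Point → ℕ
  | 0 => 0
  | .some x _ _ => height x

variable [CharP κ 2] [DecidableEq (RatFunc κ)]
  {ω : RatFunc κ} (hω : ω ^ 2 + ω = 1)

/-- The point `(1, t + ω)` of `E s`. -/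
noncomputable def P₀ : (E (s κ)).Point :=
  mkPoint 1 (RatFunc.X + ω) (by rw [s]; grind)

/-- The point `(t, t² + ωt)` of `E (s²)`, half of the Frobenius image of `P₀`. -/
noncomputable def P₁ : (E (s κ ^ 2)).Point :=
  mkPoint RatFunc.X (RatFunc.X ^ 2 + ω * RatFunc.X) (by rw [s]; grind)

variable (κ) in
/-- The two-torsion point `(0, s)` of `E (s²)`. -/
noncomputable def T₁ : (E (s κ ^ 2)).Point :=
  mkPoint 0 (s κ) (by ring)

theorem two_nsmul_P₁ : 2 • P₁ hω = frobeniusHom (s κ) (P₀ hω) := by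
  have hX : (RatFunc.X : RatFunc κ) ≠ 0 := RatFunc.X_ne_zero
  have hx : (RatFunc.X : RatFunc κ) ^ 2 + s κ ^ 2 / RatFunc.X ^ 2 = 1 := by
    rw [s]
    field_simp
    grind
  obtain ⟨h₃, hdouble⟩ := exists_two_nsmul_mkPoint (b := s κ ^ 2) _ hX
  rw [P₁, P₀, hdouble, frobeniusHom_mkPoint, mkPoint_inj, hx]
  refine ⟨(one_pow 2).symm, ?_⟩
  field_simp
  grind

theorem exists_mkPoint_add_sub_P₀ {x y : RatFunc κ} (h : y ^ 2 + x * y = x ^ 3 + s κ)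
    (hx : x ≠ 1) :
    ∃ x₃ y₃ h₃ x₄ y₄ h₄, mkPoint x y h + P₀ hω = mkPoint x₃ y₃ h₃ ∧
      mkPoint x y h - P₀ hω = mkPoint x₄ y₄ h₄ ∧
      x₃.num.natDegree + x₄.num.natDegree ≤ 2 * height x + 2 := by
  obtain ⟨x₃, y₃, h₃, x₄, y₄, h₄, hadd, hsub, hsum, hprod⟩ :=
    exists_mkPoint_add_sub_mkPoint h (y' := RatFunc.X + ω) (by rw [s]; grind) hx
  refine ⟨x₃, y₃, h₃, x₄, y₄, h₄, hadd, hsub, ?_⟩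
  have hle := natDegree_num_add_natDegree_num_le (B := X ^ 2 + X)
    (by rwa [Ne, CharTwo.add_eq_zero]) (hsum.trans (mul_one x))
    (hprod.trans (by rw [algebraMap_X_sq_add_X, one_pow, mul_one]))
    (ne_zero_of_equation_s h₃) (ne_zero_of_equation_s h₄)
  rwa [natDegree_X_sq_add_X] at hle

end Points

section Descent

variable {κ : Type*} [Field κ] [CharP κ 2] [IsAlgClosed κ] [DecidableEq (RatFunc κ)]

theorem exists_isSquare_xClass_mul {β : RatFunc κ} [NeZero β] {n : ℕ} (hβ : s κ ^ n = β)
    (P : (E (β ^ 2)).Point) :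
    ∃ v, (v = 1 ∨ v = s κ ∨ Odd n ∧ (v = RatFunc.X ∨ v = RatFunc.X + 1)) ∧
      IsSquare (xClass P * v) := by
  classical
  rw [← algebraMap_X_sq_add_X, ← map_pow] at hβ
  obtain ⟨t, hroot, heven, hsq⟩ := exists_isSquare_xClass_mul_prod hβ P
  refine ⟨_, ?_, hsq⟩
  have ht : (t : Set κ) ⊆ {0, 1} := fun a ha => by
    have ha' : a * (a + 1) = 0 := by
      have hroot' := hroot a ha
      rw [IsRoot, eval_pow] at hroot'
      simpa [sq, mul_add] using eq_zero_of_pow_eq_zero hroot'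
    simpa [CharTwo.add_eq_zero] using ha'
  have hcard : Odd t.card → Odd n := by
    rw [natDegree_pow, natDegree_X_sq_add_X] at heven
    rw [Nat.odd_iff, Nat.odd_iff]
    rw [Nat.even_iff] at heven
    omega
  obtain rfl | rfl | rfl | rfl : t = ∅ ∨ t = {0} ∨ t = {1} ∨ t = {0, 1} := by
    exact_mod_cast Set.subset_pair_iff_eq.1 ht
  · simp
  · simp [hcard]
  · simp [hcard, CharTwo.sub_eq_add]
  · refine .inr (.inl ?_)
    rw [Finset.prod_pair zero_ne_one, C_0, sub_zero, CharTwo.sub_eq_add, ← algebraMap_X_sq_add_X,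
      C_1]
    ring_nf

theorem range_frobeniusHom_sup_zmultiples_eq_top {β : RatFunc κ} [NeZero β] {n : ℕ}
    (hβ : s κ ^ n = β) (hn : Even n) {G : (E (β ^ 2)).Point} (hG : IsSquare (s κ * xClass G)) :
    (frobeniusHom β).range ⊔ AddSubgroup.zmultiples G = ⊤ := by
  refine range_frobeniusHom_sup_eq_top fun P => ?_
  obtain ⟨v, rfl | rfl | ⟨hodd, -⟩, hv⟩ := exists_isSquare_xClass_mul hβ P
  · exact ⟨0, zero_mem _, hv⟩
  · refine ⟨G, AddSubgroup.mem_zmultiples G, ?_⟩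
    refine isSquare_of_isSquare_mul_sq (NeZero.ne (s κ)) ?_
    rw [show xClass P * xClass G * s κ ^ 2 = xClass P * s κ * (s κ * xClass G) by ring]
    exact hv.mul hG
  · exact absurd hn (Nat.not_even_iff_odd.2 hodd)

theorem exists_two_nsmul_eq_frobeniusHom_s (P : (E (s κ)).Point) :
    ∃ Q : (E (s κ ^ 2)).Point, 2 • Q = frobeniusHom (s κ) P := by
  induction P using point_cases with
  | zero => exact ⟨0, by simp⟩
  | affine x y h =>
    obtain ⟨w, hw⟩ := exists_sq_add_self_eq_of_equation (B := X ^ 2 + X)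
      (by rw [natDegree_X_sq_add_X]; decide) (h.trans (by rw [algebraMap_X_sq_add_X]))
    exact exists_two_nsmul_eq_frobeniusHom h (ne_zero_of_equation_s h) (z := x * w + y) (by grind)

variable {ω : RatFunc κ} (hω : ω ^ 2 + ω = 1)

theorem range_frobeniusHom_sup_zmultiples_T₁_sup_zmultiples_P₁ :
    (frobeniusHom (s κ)).range ⊔ (AddSubgroup.zmultiples (T₁ κ) ⊔ AddSubgroup.zmultiples (P₁ hω)) =
      ⊤ := by
  have hT : T₁ κ ∈ AddSubgroup.zmultiples (T₁ κ) ⊔ AddSubgroup.zmultiples (P₁ hω) :=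
    AddSubgroup.mem_sup_left (AddSubgroup.mem_zmultiples _)
  have hP : P₁ hω ∈ AddSubgroup.zmultiples (T₁ κ) ⊔ AddSubgroup.zmultiples (P₁ hω) :=
    AddSubgroup.mem_sup_right (AddSubgroup.mem_zmultiples _)
  have hxT : xClass (T₁ κ) = s κ := xClass_mkPoint_zero _
  have hxP : xClass (P₁ hω) = RatFunc.X := xClass_mkPoint _ RatFunc.X_ne_zero
  refine range_frobeniusHom_sup_eq_top fun P => ?_
  obtain ⟨v, rfl | rfl | ⟨-, rfl | rfl⟩, hv⟩ := exists_isSquare_xClass_mul (pow_one (s κ)) P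
  · exact ⟨0, zero_mem _, hv⟩
  · exact ⟨T₁ κ, hT, by rwa [hxT]⟩
  · exact ⟨P₁ hω, hP, by rwa [hxP]⟩
  · refine ⟨T₁ κ + P₁ hω, add_mem hT hP, isSquare_of_isSquare_mul_sq (NeZero.ne (s κ)) ?_⟩
    have hmul := hv.mul (isSquare_xClass_mul_mul_add (T₁ κ) (P₁ hω))
    have hs : s κ = RatFunc.X * (RatFunc.X + 1) := by rw [s]; ring
    rwa [hxT, hxP, show xClass P * (RatFunc.X + 1) * (s κ * RatFunc.X * xClass (T₁ κ + P₁ hω)) =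
      xClass P * xClass (T₁ κ + P₁ hω) * s κ ^ 2 by
        linear_combination -xClass P * xClass (T₁ κ + P₁ hω) * s κ * hs] at hmul

theorem eq_two_nsmul_or_add_sub_eq_two_nsmul (P : (E (s κ)).Point) :
    (∃ Q, P = 2 • Q) ∨ ∃ Q Q', P + P₀ hω = 2 • Q ∧ P - P₀ hω = 2 • Q' := by
  obtain ⟨R, hR⟩ := exists_two_nsmul_eq_frobeniusHom_s P
  obtain ⟨_, ⟨Q, rfl⟩, _, hTP, rfl⟩ := AddSubgroup.mem_sup.1
    (range_frobeniusHom_sup_zmultiples_T₁_sup_zmultiples_P₁ hω ▸ AddSubgroup.mem_top R)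
  obtain ⟨_, ⟨i, rfl⟩, _, ⟨j, rfl⟩, rfl⟩ := AddSubgroup.mem_sup.1 hTP
  have hT : 2 • T₁ κ = 0 := two_nsmul_mkPoint_zero _
  have hP : P = 2 • Q + j • P₀ hω := frobeniusHom_injective _ <| by
    rw [← hR, map_add, map_nsmul, map_zsmul, ← two_nsmul_P₁]
    simp only [nsmul_add, smul_comm 2 i, smul_comm 2 j, hT, zsmul_zero, zero_add]
  obtain ⟨m, rfl | rfl⟩ := Int.even_or_odd' j
  · exact .inl ⟨Q + m • P₀ hω, by rw [hP]; module⟩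
  · exact .inr ⟨Q + (m + 1) • P₀ hω, Q + m • P₀ hω, by rw [hP]; module, by rw [hP]; module⟩

theorem max_two_le_natDegree_num_of_eq_two_nsmul {x y : RatFunc κ}
    {h : y ^ 2 + x * y = x ^ 3 + s κ} {Q : (E (s κ)).Point} (hQ : mkPoint x y h = 2 • Q) :
    max 2 (4 * pointHeight Q) ≤ x.num.natDegree := by
  induction Q using point_cases with
  | zero => exact absurd (hQ.trans (nsmul_zero 2)) (mkPoint_ne_zero h)
  | affine x' y' h' =>
    have hx' := ne_zero_of_equation_s h'
    obtain ⟨h₃, hdouble⟩ := exists_two_nsmul_mkPoint h' hx'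
    rw [hdouble, mkPoint_inj] at hQ
    have hnum := natDegree_num_sq_add_div_sq (squarefree_X_sq_add_X κ)
      (by rw [natDegree_X_sq_add_X]; decide) hx' (h'.trans (by rw [algebraMap_X_sq_add_X]))
    rw [algebraMap_X_sq_add_X, natDegree_X_sq_add_X, ← hQ.1] at hnum
    change max 2 (4 * height x') ≤ _
    rw [height]
    omega

theorem pointHeight_lt_pointHeight_two_nsmul {P : (E (s κ)).Point} (hP : P ≠ 0) :
    pointHeight P < pointHeight (2 • P) := by
  induction P using point_cases with
  | zero => exact absurd rfl hP
  | affine x y h =>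
    obtain ⟨h₂, hdouble⟩ := exists_two_nsmul_mkPoint h (ne_zero_of_equation_s h)
    have hle := max_two_le_natDegree_num_of_eq_two_nsmul hdouble.symm
    have hnum := natDegree_num_le_height (x ^ 2 + s κ / x ^ 2)
    rw [hdouble]
    change _ < height (x ^ 2 + s κ / x ^ 2)
    omega

theorem not_isOfFinAddOrder_P₀ : ¬ IsOfFinAddOrder (P₀ hω) :=
  not_isOfFinAddOrder_of_lt_two_nsmul pointHeight rfl
    (fun _ => pointHeight_lt_pointHeight_two_nsmul) (mkPoint_ne_zero _)

theorem zmultiples_P₀_eq_top : AddSubgroup.zmultiples (P₀ hω) = ⊤ := by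
  have hP₀ := AddSubgroup.mem_zmultiples (P₀ hω)
  refine zmultiples_eq_top_of_descent (P₀ hω) pointHeight fun P => ?_
  induction P using point_cases with
  | zero => exact .inl (zero_mem _)
  | affine x y h =>
  change _ ∨ ∃ Q, pointHeight Q < height x ∧ _
  rcases eq_two_nsmul_or_add_sub_eq_two_nsmul hω (mkPoint x y h) with ⟨Q, hQ⟩ | ⟨Q, Q', hQ, hQ'⟩
  · have hle := max_two_le_natDegree_num_of_eq_two_nsmul hQ
    have hnum := natDegree_num_le_height x
    exact .inr ⟨Q, by omega, by rw [hQ, sub_self]; exact zero_mem _⟩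
  by_cases hx : x = 1
  · subst hx
    obtain heq | heq := mkPoint_eq_or_eq_neg h (y' := RatFunc.X + ω) (by rw [s]; grind)
    · exact .inl (heq ▸ hP₀)
    · exact .inl (heq ▸ neg_mem hP₀)
  obtain ⟨x₃, y₃, h₃, x₄, y₄, h₄, hadd, hsub, hle⟩ := exists_mkPoint_add_sub_P₀ hω h hx
  have hle₃ := max_two_le_natDegree_num_of_eq_two_nsmul (hadd.symm.trans hQ)
  have hle₄ := max_two_le_natDegree_num_of_eq_two_nsmul (hsub.symm.trans hQ')
  rcases le_total x₃.num.natDegree x₄.num.natDegree with h₃₄ | h₄₃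
  · refine .inr ⟨Q, by omega, ?_⟩
    rw [← hQ, sub_add_cancel_left]
    exact neg_mem hP₀
  · refine .inr ⟨Q', by omega, ?_⟩
    rwa [← hQ', sub_sub_cancel]

end Descent

section Tower

variable (κ : Type*) [Field κ] [CharP κ 2]

/-- The point `(s, s²)` of `E (s⁴)`. -/
noncomputable def Q₂ : (E ((s κ ^ 2) ^ 2)).Point :=
  mkPoint (s κ) (s κ ^ 2) (by ring)

/-- The point of order eight of `E (s⁸)`, with `x`-coordinate `s t²`. -/
noncomputable def R₃ : (E (((s κ ^ 2) ^ 2) ^ 2)).Point :=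
  mkPoint (s κ * RatFunc.X ^ 2)
    (s κ * RatFunc.X ^ 2 * ((RatFunc.X + 1) * (RatFunc.X ^ 3 + RatFunc.X + 1)))
    (by rw [s]; generalize (RatFunc.X : RatFunc κ) = t; grind)

variable [DecidableEq (RatFunc κ)]

theorem two_nsmul_Q₂ : 2 • Q₂ κ = frobeniusHom _ (T₁ κ) := by
  have hs := NeZero.ne (s κ)
  have hx : s κ ^ 2 + (s κ ^ 2) ^ 2 / s κ ^ 2 = 0 := by
    rw [sq (s κ ^ 2), mul_div_cancel_right₀ _ (pow_ne_zero 2 hs), CharTwo.add_self_eq_zero]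
  obtain ⟨h, hdouble⟩ := exists_two_nsmul_mkPoint (b := (s κ ^ 2) ^ 2) _ hs
  rw [Q₂, T₁, hdouble, frobeniusHom_mkPoint, mkPoint_inj, hx, mul_zero, add_zero]
  exact ⟨(zero_pow two_ne_zero).symm, rfl⟩

theorem two_nsmul_R₃ : 2 • R₃ κ = frobeniusHom _ (Q₂ κ) := by
  have hX : (RatFunc.X : RatFunc κ) ≠ 0 := RatFunc.X_ne_zero
  have hs := NeZero.ne (s κ)
  have hx : (s κ * RatFunc.X ^ 2) ^ 2 + ((s κ ^ 2) ^ 2) ^ 2 / (s κ * RatFunc.X ^ 2) ^ 2 =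
      s κ ^ 2 := by
    field_simp
    rw [s]
    generalize (RatFunc.X : RatFunc κ) = t
    grind
  obtain ⟨h, hdouble⟩ := exists_two_nsmul_mkPoint (b := ((s κ ^ 2) ^ 2) ^ 2) _
    (mul_ne_zero hs (pow_ne_zero 2 hX))
  rw [R₃, Q₂, hdouble, frobeniusHom_mkPoint, mkPoint_inj, hx]
  refine ⟨rfl, ?_⟩
  field_simp
  rw [s]
  generalize (RatFunc.X : RatFunc κ) = t
  grind

theorem four_nsmul_R₃ : 4 • R₃ κ = frobeniusHom _ (frobeniusHom _ (T₁ κ)) := by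
  rw [show 4 = 2 * 2 from rfl, mul_nsmul, two_nsmul_R₃, ← map_nsmul, two_nsmul_Q₂]

theorem addOrderOf_R₃ : addOrderOf (R₃ κ) = 8 := by
  refine addOrderOf_eq_prime_pow (p := 2) (n := 2) ?_ ?_
  · rw [show 2 ^ 2 = 4 from rfl, four_nsmul_R₃, T₁, frobeniusHom_mkPoint, frobeniusHom_mkPoint]
    exact mkPoint_ne_zero _
  · rw [show 2 ^ (2 + 1) = 4 * 2 from rfl, mul_nsmul, four_nsmul_R₃, ← map_nsmul, ← map_nsmul,
      T₁, two_nsmul_mkPoint_zero, map_zero, map_zero]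

variable {κ} [IsAlgClosed κ] {ω : RatFunc κ} (hω : ω ^ 2 + ω = 1)

theorem not_isOfFinAddOrder_P₁ : ¬ IsOfFinAddOrder (P₁ hω) := fun h => by
  have h2 := h.nsmul (n := 2)
  rw [two_nsmul_P₁, (frobeniusHom_injective (s κ)).isOfFinAddOrder_iff] at h2
  exact not_isOfFinAddOrder_P₀ hω h2

theorem zmultiples_T₁_sup_zmultiples_P₁ :
    AddSubgroup.zmultiples (T₁ κ) ⊔ AddSubgroup.zmultiples (P₁ hω) = ⊤ := by
  rw [← range_frobeniusHom_sup_zmultiples_T₁_sup_zmultiples_P₁ hω, right_eq_sup,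
    AddMonoidHom.range_eq_map, ← zmultiples_P₀_eq_top hω, AddMonoidHom.map_zmultiples,
    ← two_nsmul_P₁, AddSubgroup.zmultiples_le]
  exact AddSubgroup.mem_sup_right (nsmul_mem (AddSubgroup.mem_zmultiples _) 2)

theorem range_frobeniusHom_sup_zmultiples_Q₂ :
    (frobeniusHom (s κ ^ 2)).range ⊔ AddSubgroup.zmultiples (Q₂ κ) = ⊤ := by
  refine range_frobeniusHom_sup_zmultiples_eq_top rfl even_two ?_
  rw [Q₂, xClass_mkPoint _ (NeZero.ne (s κ))]
  exact ⟨s κ, rfl⟩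

theorem range_frobeniusHom_sup_zmultiples_R₃ :
    (frobeniusHom ((s κ ^ 2) ^ 2)).range ⊔ AddSubgroup.zmultiples (R₃ κ) = ⊤ := by
  refine range_frobeniusHom_sup_zmultiples_eq_top (n := 4) (by ring) (by decide) ?_
  rw [R₃, xClass_mkPoint _ (mul_ne_zero (NeZero.ne (s κ)) (pow_ne_zero 2 RatFunc.X_ne_zero))]
  exact ⟨s κ * RatFunc.X, by ring⟩

theorem zmultiples_R₃_sup_zmultiples_frobeniusHom_P₁ :
    AddSubgroup.zmultiples (R₃ κ) ⊔
      AddSubgroup.zmultiples (frobeniusHom _ (frobeniusHom _ (P₁ hω))) = ⊤ := by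
  have hR := AddSubgroup.mem_zmultiples (R₃ κ)
  rw [← range_frobeniusHom_sup_zmultiples_R₃, AddMonoidHom.range_eq_map,
    ← range_frobeniusHom_sup_zmultiples_Q₂, AddMonoidHom.range_eq_map,
    ← zmultiples_T₁_sup_zmultiples_P₁ hω]
  simp only [AddSubgroup.map_sup, AddMonoidHom.map_zmultiples, ← four_nsmul_R₃, ← two_nsmul_R₃]
  have hle (n : ℕ) : AddSubgroup.zmultiples (n • R₃ κ) ≤ AddSubgroup.zmultiples (R₃ κ) :=
    AddSubgroup.zmultiples_le_of_mem (nsmul_mem hR n)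
  refine le_antisymm (sup_le le_sup_right (le_sup_of_le_left (le_sup_of_le_left le_sup_right)))
    (sup_le (sup_le (sup_le ?_ le_sup_right) ?_) le_sup_left)
  exacts [le_sup_of_le_left (hle 4), le_sup_of_le_left (hle 2)]

theorem nonempty_addEquiv_E_s_pow_eight :
    Nonempty ((E (((s κ ^ 2) ^ 2) ^ 2)).Point ≃+ (ℤ × ZMod 8)) := by
  obtain ⟨ε, hε⟩ := exists_sq_add_self_eq (1 : κ)
  have hω : RatFunc.C ε ^ 2 + RatFunc.C ε = 1 := by rw [← map_pow, ← map_add, hε, map_one]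
  have hR := addOrderOf_R₃ κ
  rw [← hR]
  refine nonempty_addEquiv_int_prod_zmod ?_ (addOrderOf_pos_iff.1 (hR ▸ Nat.zero_lt_succ 7))
    (zmultiples_R₃_sup_zmultiples_frobeniusHom_P₁ hω)
  rw [(frobeniusHom_injective _).isOfFinAddOrder_iff,
    (frobeniusHom_injective _).isOfFinAddOrder_iff]
  exact not_isOfFinAddOrder_P₁ hω

end Tower

section Translation

/-- The Weierstrass curve `y² + xy + cy = x³ + cx²`, which in characteristic two is a translate
of `E (c⁴)`. -/
def V {F : Type*} [Field F] (c : F) : Affine F :=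
  { a₁ := 1, a₂ := c, a₃ := c, a₄ := 0, a₆ := 0 }

theorem variableChange_V {F : Type*} [Field F] [CharP F 2] (c : F) :
    (⟨1, c, 0, c ^ 2⟩ : VariableChange F) • V c = E ((c ^ 2) ^ 2) := by
  ext <;> simp [variableChange_def, V, E] <;> grind

end Translation

end CharTwoCurve

open CharTwoCurve in
theorem points_iso_int_prod_zmod_eight_general (κ : Type*) [Field κ] [IsAlgClosed κ] [CharP κ 2]
    [DecidableEq (RatFunc κ)] : Nonempty ((V (s κ ^ 2)).Point ≃+ (ℤ × ZMod 8)) := by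
  obtain ⟨e⟩ := nonempty_addEquiv_E_s_pow_eight (κ := κ)
  rw [← variableChange_V] at e
  exact ⟨(AddEquiv.ofBijective _ (variableChangeHom_bijective _ _)).symm.trans e⟩

open scoped Classical in
/-- The group of points of `W : y² + xy + (t²+t)²y = x³ + (t²+t)²x²` over `K = k(t)` is isomorphic to `ℤ ⊕ ℤ/8ℤ`. -/
theorem points_iso_int_prod_zmod_eight : Nonempty (W.Point ≃+ (ℤ × ZMod 8)) :=
  points_iso_int_prod_zmod_eight_general k
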